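/- Let 𝐏 = 𝐇(n; n_1,…,n_t) be a hierarchical poset with index set 𝒩 = {(i,j) : 1 ≤ i ≤ t, 1 ≤ j ≤ n_i} and order (i,j) < (i',j') iff i < i', and let 𝒢 = ∏_{i=1}^t ∏_{j=1}^{n_i} G_{i,j} where the G_{i,j} are nontrivial finite abelian groups with |G_{i,1}| = ⋯ = |G_{i,n_i}| for each i. Then the dual partition of 𝒫_𝐏 equals 𝒫_𝐏̄, i.e., (𝒫_𝐏)̂ = 𝒫_𝐏̄ as partitions of 𝒢̂. Consequently 𝒫_𝐏 is Fourier-reflexive. -/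

import Mathlib

open Finset
open scoped Classical

variable {ι : Type*} [Fintype ι] [DecidableEq ι]
  {H : ι → Type*} [∀ i, AddCommGroup (H i)] [∀ i, Fintype (H i)]

/-- The sum of the character `χ` over the block of the partition `P` indexed by `c`. -/
noncomputable def blockSum {G : Type*} [AddCommGroup G] [Fintype G]
    (P : Setoid G) (χ : AddChar G ℂ) (c : Quotient P) : ℂ :=
  ∑ g : G, if Quotient.mk P g = c then χ g else 0

/-- The dual partition `P̂` of the character group. -/
noncomputable def dualSetoid {G : Type*} [AddCommGroup G] [Fintype G]
    (P : Setoid G) : Setoid (AddChar G ℂ) :=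
  Setoid.ker (blockSum P)

/-- The sum `Σ_{χ ∈ Q_c} χ(g)` over the block of the dual partition indexed by `c`. -/
noncomputable def dualBlockSum {G : Type*} [AddCommGroup G] [Fintype G]
    (P : Setoid G) (g : G) (c : Quotient (dualSetoid P)) : ℂ :=
  ∑ᶠ χ : AddChar G ℂ, if Quotient.mk (dualSetoid P) χ = c then χ g else 0

/-- The bidual partition `P̂̂`, a partition of `G` via the canonical identification of the
double character group with `G`. -/
noncomputable def bidualSetoid {G : Type*} [AddCommGroup G] [Fintype G]
    (P : Setoid G) : Setoid G :=
  Setoid.ker (dualBlockSum P)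

/-- The `i`-th component of a character of a product group, under the canonical
identification of the character group of a product with the product of the character
groups. -/
noncomputable def comp1 (χ : AddChar (∀ i, H i) ℂ) (i : ι) : AddChar (H i) ℂ :=
  χ.compAddMonoidHom (AddMonoidHom.single H i)

/-- The poset weight `wt_𝐏(g) = |⟨supp(g)⟩|` of `g ∈ G₁ × ⋯ × Gₙ`: the size of the ideal
generated by the support of `g` in the poset whose order relation is `le`. -/
noncomputable def posetWt (le : ι → ι → Prop) (g : ∀ i, H i) : ℕ :=
  (Finset.univ.filter fun j : ι => ∃ i : ι, g i ≠ 0 ∧ le j i).card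

/-- The dual-poset weight `wt_𝐏̄(χ) = |⟨supp(χ)⟩_𝐏̄|` of a character `χ` of `G₁ × ⋯ × Gₙ`:
the size of the ideal generated, in the dual (reversed) poset, by the support of `χ`
(the set of indices where the component of `χ` is not the principal character). -/
noncomputable def dualPosetWt (le : ι → ι → Prop) (χ : AddChar (∀ i, H i) ℂ) : ℕ :=
  (Finset.univ.filter fun j : ι => ∃ i : ι, comp1 χ i ≠ 1 ∧ le i j).card

/-!
Split a sum of products `∏ i, f i (a i)` with `f i 0 = 1` according to the support of `a`: with
`z i = ∑ x, f i x - 1`, each set `s` of indices contributes `∏ i ∈ s, z i`. For a character `χ` of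
the product group this gives `z i = qᵢ - 1` if `χᵢ` is principal and `z i = -1` otherwise, where
`qᵢ` is the order of the `i`-th factor; for an element of the product group, paired with all
characters, the same holds. So both claims are about finite sets of indices.

An ideal of the hierarchical poset consists of everything below some level `l` together with
`k > 0` elements of level `l`, and its size determines `l` and `k`. The sum over the sets that
generate an ideal of this size is `∏ (1 + z i)` over the levels below `l` times the `k`-th
elementary symmetric function of the `z i` on level `l`. The product vanishes as soon as `χ` is
nonprincipal below level `l`; otherwise the multiset of the `z i` on level `l` depends only on the
number of nonprincipal `χᵢ` there. These data are determined by the dual-poset weight, and the case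
`k = 1` at the lowest level where one of two characters is nonprincipal recovers that number.
-/

section Ideals

variable {κ L : Type*} [Fintype κ] [LinearOrder L] {lev : κ → L} {s s' : Finset κ} {l : L}

/-- The size of the ideal generated by `s` in the hierarchical poset on `κ` with level function
`lev`, in which `j` lies below `i` iff `lev j < lev i`. The dual poset has the level function
`OrderDual.toDual ∘ lev`. -/
noncomputable def idealCard (lev : κ → L) (s : Finset κ) : ℕ :=
  #{j : κ | ∃ i ∈ s, j = i ∨ lev j < lev i}

theorem idealCard_le_add (hs : ∀ i ∈ s, lev i ≤ l) :
    idealCard lev s ≤ #{j | lev j < l} + #{i ∈ s | lev i = l} := by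
  refine (card_le_card fun j hj ↦ ?_).trans (card_union_le _ _)
  simp only [mem_filter, mem_univ, true_and, mem_union] at hj ⊢
  obtain ⟨i, hi, rfl | hji⟩ := hj
  · exact (hs j hi).lt_or_eq.imp_right fun h ↦ ⟨hi, h⟩
  · exact .inl (hji.trans_le (hs i hi))

theorem idealCard_eq_add (hs : ∀ i ∈ s, lev i ≤ l) (hpos : 0 < #{i ∈ s | lev i = l}) :
    idealCard lev s = #{j | lev j < l} + #{i ∈ s | lev i = l} := by
  refine (idealCard_le_add hs).antisymm ?_
  obtain ⟨k, hk⟩ := card_pos.1 hpos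
  rw [← card_union_of_disjoint (Finset.disjoint_left.2 (by grind))]
  refine card_le_card fun j hj ↦ ?_
  simp only [mem_filter, mem_univ, true_and, mem_union] at hj hk ⊢
  obtain hj | ⟨hj, -⟩ := hj
  · exact ⟨k, hk.1, .inr (hk.2 ▸ hj)⟩
  · exact ⟨j, hj, .inl rfl⟩

theorem idealCard_lt_idealCard (hs : ∀ i ∈ s, lev i ≤ l) {i : κ} (hi : i ∈ s') (hl : l < lev i) :
    idealCard lev s < idealCard lev s' := by
  refine card_lt_card ((ssubset_iff_of_subset fun j hj ↦ ?_).2 ⟨i, ?_, ?_⟩)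
  · simp only [mem_filter, mem_univ, true_and] at hj ⊢
    obtain ⟨k, hk, rfl | hjk⟩ := hj
    · exact ⟨i, hi, .inr ((hs j hk).trans_lt hl)⟩
    · exact ⟨i, hi, .inr (hjk.trans ((hs k hk).trans_lt hl))⟩
  · simpa using ⟨i, hi, .inl rfl⟩
  · simp only [mem_filter, mem_univ, true_and, not_exists, not_and, not_or, not_lt]
    exact fun k hk ↦ ⟨fun h ↦ (hs k hk).not_gt (h ▸ hl), (hs k hk).trans hl.le⟩

theorem le_and_card_level_eq_of_idealCard_eq (h : idealCard lev s = idealCard lev s')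
    (hs : ∀ i ∈ s, lev i ≤ l) :
    (∀ i ∈ s', lev i ≤ l) ∧ #{i ∈ s | lev i = l} = #{i ∈ s' | lev i = l} := by
  have hs' : ∀ i ∈ s', lev i ≤ l := fun i hi ↦
    le_of_not_gt fun hl ↦ (idealCard_lt_idealCard hs hi hl).ne h
  refine ⟨hs', ?_⟩
  have := idealCard_le_add hs
  have := idealCard_le_add hs'
  have := idealCard_eq_add hs
  have := idealCard_eq_add hs'
  lia

theorem le_and_card_level_eq_of_idealCard_toDual_eq
    (h : idealCard (OrderDual.toDual ∘ lev) s = idealCard (OrderDual.toDual ∘ lev) s')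
    (hs : ∀ i ∈ s, l ≤ lev i) :
    (∀ i ∈ s', l ≤ lev i) ∧ #{i ∈ s | lev i = l} = #{i ∈ s' | lev i = l} :=
  le_and_card_level_eq_of_idealCard_eq (l := OrderDual.toDual l) h hs

theorem idealCard_eq_idealCard_iff (hs : ∀ i ∈ s, lev i ≤ l) (hpos : 0 < #{i ∈ s | lev i = l}) :
    idealCard lev s' = idealCard lev s ↔
      (∀ i ∈ s', lev i ≤ l) ∧ #{i ∈ s' | lev i = l} = #{i ∈ s | lev i = l} := by
  refine ⟨fun h ↦ ?_, fun ⟨hs', h⟩ ↦ ?_⟩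
  · exact (le_and_card_level_eq_of_idealCard_eq h.symm hs).imp_right Eq.symm
  · rw [idealCard_eq_add hs hpos, idealCard_eq_add hs' (h ▸ hpos), h]

theorem idealCard_eq_of_card_level_eq
    (h : ∀ l, (∀ i ∈ s, lev i ≤ l) → (∀ i ∈ s', lev i ≤ l) →
      #{i ∈ s | lev i = l} = #{i ∈ s' | lev i = l}) :
    idealCard lev s = idealCard lev s' := by
  obtain hemp | hne := (s ∪ s').eq_empty_or_nonempty
  · rw [(union_eq_empty.1 hemp).1, (union_eq_empty.1 hemp).2]
  obtain ⟨i, hi, hmax⟩ := exists_max_image _ lev hne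
  have hs : ∀ j ∈ s, lev j ≤ lev i := fun j hj ↦ hmax j (mem_union_left _ hj)
  have hs' : ∀ j ∈ s', lev j ≤ lev i := fun j hj ↦ hmax j (mem_union_right _ hj)
  have hcard := h _ hs hs'
  have hpos : 0 < #{j ∈ s | lev j = lev i} := by
    obtain hi | hi := mem_union.1 hi
    · exact card_pos.2 ⟨i, by simpa using hi⟩
    · exact hcard ▸ card_pos.2 ⟨i, by simpa using hi⟩
  rw [idealCard_eq_add hs hpos, idealCard_eq_add hs' (hcard ▸ hpos), hcard]

@[simp]
theorem idealCard_eq_zero_iff : idealCard lev s = 0 ↔ s = ∅ := by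
  rw [idealCard, card_eq_zero]
  refine ⟨fun h ↦ eq_empty_of_forall_notMem fun i hi ↦ ?_, by simp +contextual⟩
  exact filter_eq_empty_iff.1 h (mem_univ i) ⟨i, hi, .inl rfl⟩

end Ideals

section IdealSum

variable {κ L R : Type*} [Fintype κ] [LinearOrder L] {lev : κ → L}

/-- The sum of `∏ i ∈ s, z i` over the sets `s` generating an ideal of size `m` in the
hierarchical poset with level function `lev`. For suitable `z` this is the sum of a character over
the elements of poset weight `m`. -/
noncomputable def idealSum [CommSemiring R] (lev : κ → L) (z : κ → R) (m : ℕ) : R :=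
  ∑ s : Finset κ with idealCard lev s = m, ∏ i ∈ s, z i

section CommSemiring

variable [CommSemiring R] {s : Finset κ} {l : L}

@[simp]
theorem idealSum_zero (z : κ → R) : idealSum lev z 0 = 1 := by
  simp [idealSum, filter_eq']

theorem idealSum_idealCard (z : κ → R) (hs : ∀ i ∈ s, lev i ≤ l)
    (hpos : 0 < #{i ∈ s | lev i = l}) :
    idealSum lev z (idealCard lev s) =
      (∏ i with lev i < l, (1 + z i)) *
        (({i | lev i = l} : Finset κ).val.map z).esymm #{i ∈ s | lev i = l} := by
  simp only [idealSum, idealCard_eq_idealCard_iff hs hpos, esymm_map_val, prod_one_add,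
    sum_mul_sum, ← sum_product']
  have hunion : ∀ p ∈ ({i | lev i < l} : Finset κ).powerset ×ˢ
      powersetCard #{i ∈ s | lev i = l} {i | lev i = l},
      {i ∈ p.1 ∪ p.2 | lev i < l} = p.1 ∧ {i ∈ p.1 ∪ p.2 | lev i = l} = p.2 := by
    rintro ⟨u, v⟩ huv
    constructor <;> ext <;> grind
  refine sum_nbij' (fun u ↦ ({i ∈ u | lev i < l}, {i ∈ u | lev i = l})) (fun p ↦ p.1 ∪ p.2)
    ?_ ?_ ?_ (fun p hp ↦ Prod.ext (hunion p hp).1 (hunion p hp).2) ?_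
  · grind
  · intro p hp
    have := (hunion p hp).2
    grind
  · grind
  · intro u hu
    simp only [mem_filter, mem_univ, true_and] at hu
    rw [← prod_filter_mul_prod_filter_not u (lev · < l)]
    congr 2
    exact filter_congr fun i hi ↦ not_lt.trans (hu.1 i hi).ge_iff_eq

theorem idealSum_idealCard_singleton (z : κ → R) (i : κ) :
    idealSum lev z (idealCard lev {i}) =
      (∏ j with lev j < lev i, (1 + z j)) * ∑ j with lev j = lev i, z j := by
  have hcard : #{j ∈ {i} | lev j = lev i} = 1 := by simp [filter_singleton]
  rw [idealSum_idealCard (l := lev i) z (by simp) (by simp [hcard]), hcard, esymm_map_val,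
    powersetCard_one]
  simp

end CommSemiring

section PuncturedSum

variable [CommRing R] {q : κ → R} {s s' : Finset κ} {l : L}

/-- The value at `i` of the sum of a character over the nonzero elements of the `i`-th factor, when
the `i`-th factor has `q i` elements and the character is nontrivial exactly on the factors in
`s`. -/
noncomputable def puncturedSum (q : κ → R) (s : Finset κ) (i : κ) : R :=
  (if i ∈ s then 0 else q i) - 1

theorem prod_one_add_puncturedSum_eq_zero {i : κ} (hi : i ∈ s) (hl : lev i < l) :
    ∏ j with lev j < l, (1 + puncturedSum q s j) = 0 :=
  prod_eq_zero (i := i) (by simpa using hl) (by simp [puncturedSum, hi])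

theorem prod_one_add_puncturedSum_eq_prod (hs : ∀ i ∈ s, l ≤ lev i) :
    ∏ j with lev j < l, (1 + puncturedSum q s j) = ∏ j with lev j < l, q j := by
  refine prod_congr rfl fun j hj ↦ ?_
  have hjs : j ∉ s := fun h ↦ (hs j h).not_gt (by simpa using hj)
  simp [puncturedSum, hjs]

theorem map_level_puncturedSum {c : R} (hq : ∀ i, lev i = l → q i = c) :
    ({i | lev i = l} : Finset κ).val.map (puncturedSum q s) =
      Multiset.replicate #{i ∈ s | lev i = l} (-1) +
        Multiset.replicate (#{i | lev i = l} - #{i ∈ s | lev i = l}) (c - 1) := by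
  have hin : #{i ∈ ({i | lev i = l} : Finset κ) | i ∈ s} = #{i ∈ s | lev i = l} :=
    congrArg card (by grind)
  have hout : #{i ∈ ({i | lev i = l} : Finset κ) | i ∉ s} =
      #{i | lev i = l} - #{i ∈ s | lev i = l} := by
    have := card_filter_add_card_filter_not (s := ({i | lev i = l} : Finset κ)) (· ∈ s)
    lia
  rw [← Multiset.filter_add_not (· ∈ s) ({i | lev i = l} : Finset κ).val, Multiset.map_add]
  congr 1
  · refine Multiset.eq_replicate.2 ⟨by rw [Multiset.card_map]; exact hin, fun x hx ↦ ?_⟩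
    obtain ⟨i, hi, rfl⟩ := Multiset.mem_map.1 hx
    simp [puncturedSum, (Multiset.mem_filter.1 hi).2]
  · refine Multiset.eq_replicate.2 ⟨by rw [Multiset.card_map]; exact hout, fun x hx ↦ ?_⟩
    obtain ⟨i, hi, rfl⟩ := Multiset.mem_map.1 hx
    obtain ⟨hil, his⟩ := Multiset.mem_filter.1 hi
    rw [puncturedSum, if_neg his, hq i (by simpa using hil)]

theorem sum_level_puncturedSum {c : R} (hq : ∀ i, lev i = l → q i = c) :
    ∑ i with lev i = l, puncturedSum q s i =
      #{i | lev i = l} * (c - 1) - #{i ∈ s | lev i = l} * c := by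
  have hle : #{i ∈ s | lev i = l} ≤ #{i | lev i = l} := card_le_card (by grind)
  rw [sum_eq_multiset_sum, map_level_puncturedSum hq, Multiset.sum_add, Multiset.sum_replicate,
    Multiset.sum_replicate, nsmul_eq_mul, nsmul_eq_mul, Nat.cast_sub hle]
  ring

theorem idealSum_puncturedSum_congr (hq : ∀ i j, lev i = lev j → q i = q j)
    (h : idealCard (OrderDual.toDual ∘ lev) s = idealCard (OrderDual.toDual ∘ lev) s') (m : ℕ) :
    idealSum lev (puncturedSum q s) m = idealSum lev (puncturedSum q s') m := by
  by_cases hm : ∃ u, idealCard lev u = m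
  swap
  · simp [idealSum, not_exists.1 hm]
  obtain ⟨u, rfl⟩ := hm
  obtain rfl | hu := u.eq_empty_or_nonempty
  · rw [idealCard_eq_zero_iff.2 rfl, idealSum_zero, idealSum_zero]
  obtain ⟨i, hi, hmax⟩ := exists_max_image u lev hu
  have hpos : 0 < #{j ∈ u | lev j = lev i} := card_pos.2 ⟨i, by simpa using hi⟩
  rw [idealSum_idealCard _ hmax hpos, idealSum_idealCard _ hmax hpos]
  by_cases hs : ∀ j ∈ s, lev i ≤ lev j
  · obtain ⟨hs', hcard⟩ := le_and_card_level_eq_of_idealCard_toDual_eq h hs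
    rw [prod_one_add_puncturedSum_eq_prod hs, prod_one_add_puncturedSum_eq_prod hs',
      map_level_puncturedSum (hq · i), map_level_puncturedSum (hq · i), hcard]
  · have hs' : ¬ ∀ j ∈ s', lev i ≤ lev j := fun hs' ↦
      hs (le_and_card_level_eq_of_idealCard_toDual_eq h.symm hs').1
    push Not at hs hs'
    obtain ⟨j, hj, hji⟩ := hs
    obtain ⟨k, hk, hki⟩ := hs'
    rw [prod_one_add_puncturedSum_eq_zero hj hji, prod_one_add_puncturedSum_eq_zero hk hki,
      zero_mul, zero_mul]

theorem card_level_eq_of_idealSum_eq [IsDomain R] [CharZero R] (hq₀ : ∀ i, q i ≠ 0)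
    (hq : ∀ i j, lev i = lev j → q i = q j)
    (h : ∀ m, idealSum lev (puncturedSum q s) m = idealSum lev (puncturedSum q s') m)
    (hs : ∀ i ∈ s, l ≤ lev i) (hs' : ∀ i ∈ s', l ≤ lev i) :
    #{i ∈ s | lev i = l} = #{i ∈ s' | lev i = l} := by
  by_cases hl : ∃ i, lev i = l
  swap
  · push Not at hl
    simp [hl]
  obtain ⟨i, rfl⟩ := hl
  have hprod : ∏ j with lev j < lev i, q j ≠ 0 := prod_ne_zero_iff.2 fun j _ ↦ hq₀ j
  have hsum := h (idealCard lev {i})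
  rw [idealSum_idealCard_singleton, idealSum_idealCard_singleton,
    prod_one_add_puncturedSum_eq_prod hs, prod_one_add_puncturedSum_eq_prod hs',
    mul_right_inj' hprod, sum_level_puncturedSum (hq · i), sum_level_puncturedSum (hq · i),
    sub_right_inj, mul_left_inj' (hq₀ i)] at hsum
  exact_mod_cast hsum

theorem idealSum_puncturedSum_eq_iff [IsDomain R] [CharZero R] (hq₀ : ∀ i, q i ≠ 0)
    (hq : ∀ i j, lev i = lev j → q i = q j) :
    (∀ m, idealSum lev (puncturedSum q s) m = idealSum lev (puncturedSum q s') m) ↔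
      idealCard (OrderDual.toDual ∘ lev) s = idealCard (OrderDual.toDual ∘ lev) s' :=
  ⟨fun h ↦ idealCard_eq_of_card_level_eq fun _ ↦ card_level_eq_of_idealSum_eq hq₀ hq h,
    idealSum_puncturedSum_congr hq⟩

end PuncturedSum

end IdealSum

section Support

variable {κ R : Type*} [Fintype κ] {α : κ → Type*} [∀ i, Zero (α i)]

/-- The set of indices at which the tuple `a` is nonzero; for a tuple of additive characters, the
set of indices with a nonprincipal component. -/
noncomputable def piSupport (a : ∀ i, α i) : Finset κ := {i | a i ≠ 0}

@[simp]
theorem mem_piSupport {a : ∀ i, α i} {i : κ} : i ∈ piSupport a ↔ a i ≠ 0 := by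
  simp [piSupport]

theorem sum_prod_filter_piSupport_eq [DecidableEq κ] [CommRing R] [∀ i, Fintype (α i)]
    {f : ∀ i, α i → R} (hf : ∀ i, f i 0 = 1) (s : Finset κ) :
    ∑ a with piSupport a = s, ∏ i, f i (a i) = ∏ i ∈ s, (∑ x, f i x - 1) := by
  have hcompl : ∀ i, ∑ x with x ≠ 0, f i x = ∑ x, f i x - 1 := fun i ↦ by
    rw [filter_ne', sum_erase_eq_sub (mem_univ _), hf]
  have hpi : ({a | piSupport a = s} : Finset (∀ i, α i)) =
      Fintype.piFinset fun i ↦ if i ∈ s then ({x | x ≠ 0} : Finset (α i)) else {0} := by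
    ext a
    simp only [mem_filter, mem_univ, true_and, Fintype.mem_piFinset, Finset.ext_iff, mem_piSupport]
    refine forall_congr' fun i ↦ ?_
    split_ifs with hi <;> simp [hi]
  rw [hpi, ← prod_univ_sum, ← prod_subset (subset_univ s)]
  · exact prod_congr rfl fun i hi ↦ by rw [if_pos hi, hcompl]
  · intro i _ hi
    rw [if_neg hi, sum_singleton, hf]

theorem sum_prod_filter_idealCard_eq [DecidableEq κ] {L : Type*} [LinearOrder L] (lev : κ → L)
    [CommRing R] [∀ i, Fintype (α i)] {f : ∀ i, α i → R} (hf : ∀ i, f i 0 = 1) (m : ℕ) :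
    ∑ a with idealCard lev (piSupport a) = m, ∏ i, f i (a i) =
      idealSum lev (fun i ↦ ∑ x, f i x - 1) m := by
  simp only [idealSum, ← sum_prod_filter_piSupport_eq hf]
  rw [← sum_fiberwise_of_maps_to (g := piSupport) (t := {s | idealCard lev s = m}) (by simp)]
  refine sum_congr rfl fun s hs ↦ ?_
  rw [filter_filter]
  congr 1
  grind

end Support

section Characters

variable {κ : Type*} [DecidableEq κ] {G : κ → Type*} [∀ i, AddCommGroup (G i)]

theorem apply_eq_prod_comp1 [Fintype κ] (χ : AddChar (∀ i, G i) ℂ) (g : ∀ i, G i) :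
    χ g = ∏ i, comp1 χ i (g i) := by
  conv_lhs => rw [← univ_sum_single g]
  exact map_prod χ.toMonoidHom (fun i ↦ Multiplicative.ofAdd (Pi.single i (g i))) univ

theorem comp1_bijective [Finite κ] :
    Function.Bijective (comp1 : AddChar (∀ i, G i) ℂ → ∀ i, AddChar (G i) ℂ) := by
  have := Fintype.ofFinite κ
  refine ⟨fun χ χ' h ↦ ?_, fun ψ ↦ ⟨∏ i, (ψ i).compAddMonoidHom (Pi.evalAddMonoidHom G i), ?_⟩⟩
  · ext g
    rw [apply_eq_prod_comp1, apply_eq_prod_comp1, h]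
  · ext i x
    rw [comp1, AddChar.compAddMonoidHom_apply, AddChar.prod_apply, prod_eq_single i]
    · simp
    · intro j _ hj
      simp [hj]
    · simp

variable [Fintype κ] [∀ i, Fintype (G i)] {L : Type*} [LinearOrder L] (lev : κ → L)

theorem sum_filter_idealCard_piSupport (χ : AddChar (∀ i, G i) ℂ) (m : ℕ) :
    ∑ g with idealCard lev (piSupport g) = m, χ g =
      idealSum lev (puncturedSum (fun i ↦ (Fintype.card (G i) : ℂ)) (piSupport (comp1 χ))) m := by
  simp only [apply_eq_prod_comp1 χ]
  rw [sum_prod_filter_idealCard_eq lev (f := fun i ↦ comp1 χ i) (by simp)]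
  congr with i
  simp [puncturedSum, AddChar.sum_eq_ite]

theorem sum_filter_idealCard_piSupport_comp1 (g : ∀ i, G i) (m : ℕ) :
    ∑ χ : AddChar (∀ i, G i) ℂ with idealCard lev (piSupport (comp1 χ)) = m, χ g =
      idealSum lev (puncturedSum (fun i ↦ (Fintype.card (G i) : ℂ)) (piSupport g)) m := by
  have hψ : ∑ ψ : ∀ i, AddChar (G i) ℂ with idealCard lev (piSupport ψ) = m, ∏ i, ψ i (g i) =
      idealSum lev (fun i ↦ ∑ ψ : AddChar (G i) ℂ, ψ (g i) - 1) m :=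
    sum_prod_filter_idealCard_eq lev (f := fun i (ψ : AddChar (G i) ℂ) ↦ ψ (g i)) (by simp) m
  have hsum (i : κ) : ∑ ψ : AddChar (G i) ℂ, ψ (g i) - 1 =
      puncturedSum (fun i ↦ (Fintype.card (G i) : ℂ)) (piSupport g) i := by
    simp [puncturedSum, AddChar.sum_apply_eq_ite]
  simp only [hsum] at hψ
  rw [← hψ]
  simp only [sum_filter]
  exact Fintype.sum_bijective comp1 comp1_bijective _ _ fun χ ↦ by rw [apply_eq_prod_comp1]

end Characters

section DualPartition

theorem forall_sum_block_eq_iff {X Y M : Type*} [Fintype X] [AddCommMonoid M] {P : Setoid X}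
    {F : X → Y} (hP : P = Setoid.ker F) {u v : X → M} :
    (∀ c : Quotient P, (∑ x, if Quotient.mk P x = c then u x else 0) =
        ∑ x, if Quotient.mk P x = c then v x else 0) ↔
      ∀ y, ∑ x with F x = y, u x = ∑ x with F x = y, v x := by
  subst hP
  have hmk (x y : X) : Quotient.mk (Setoid.ker F) x = Quotient.mk _ y ↔ F x = F y := Quotient.eq
  simp only [← sum_filter, Quotient.forall, hmk]
  refine ⟨fun h y ↦ ?_, fun h x ↦ h (F x)⟩
  by_cases hy : ∃ x, F x = y
  · obtain ⟨x, rfl⟩ := hy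
    exact h x
  · push Not at hy
    simp [hy]

variable {G : Type*} [AddCommGroup G] [Fintype G] {Y : Type*}

theorem dualSetoid_ker_iff {F : G → Y} {χ χ' : AddChar G ℂ} :
    dualSetoid (Setoid.ker F) χ χ' ↔
      ∀ y, ∑ g with F g = y, χ g = ∑ g with F g = y, χ' g := by
  rw [dualSetoid, Setoid.ker_def, funext_iff]
  exact forall_sum_block_eq_iff rfl

theorem bidualSetoid_iff_of_dualSetoid_eq {P : Setoid G} {F : AddChar G ℂ → Y}
    (hP : dualSetoid P = Setoid.ker F) {g g' : G} :
    bidualSetoid P g g' ↔ ∀ y, ∑ χ with F χ = y, χ g = ∑ χ with F χ = y, χ g' := by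
  rw [bidualSetoid, Setoid.ker_def, funext_iff]
  simp only [dualBlockSum, finsum_eq_sum_of_fintype]
  exact forall_sum_block_eq_iff hP

end DualPartition

section PosetWeight

variable {κ L : Type*} [Fintype κ] [LinearOrder L] (lev : κ → L) {G : κ → Type*}
  [∀ i, AddCommGroup (G i)]

theorem posetWt_eq_idealCard (g : ∀ i, G i) :
    posetWt (fun i j ↦ i = j ∨ lev i < lev j) g = idealCard lev (piSupport g) := by
  simp [posetWt, idealCard]

theorem dualPosetWt_eq_idealCard [DecidableEq κ] (χ : AddChar (∀ i, G i) ℂ) :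
    dualPosetWt (fun i j ↦ i = j ∨ lev i < lev j) χ =
      idealCard (OrderDual.toDual ∘ lev) (piSupport (comp1 χ)) := by
  simp [dualPosetWt, idealCard, AddChar.one_eq_zero, eq_comm]

end PosetWeight

theorem hierarchical_poset_duality_general {κ L : Type*} [Fintype κ] [DecidableEq κ]
    [LinearOrder L] (lev : κ → L) (G : κ → Type*) [∀ i, AddCommGroup (G i)] [∀ i, Fintype (G i)]
    (hcard : ∀ i j, lev i = lev j → Nat.card (G i) = Nat.card (G j)) :
    dualSetoid (Setoid.ker (posetWt (H := G) fun i j ↦ i = j ∨ lev i < lev j)) =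
        Setoid.ker (dualPosetWt (H := G) fun i j ↦ i = j ∨ lev i < lev j) ∧
      bidualSetoid (Setoid.ker (posetWt (H := G) fun i j ↦ i = j ∨ lev i < lev j)) =
        Setoid.ker (posetWt (H := G) fun i j ↦ i = j ∨ lev i < lev j) := by
  have hq₀ (i : κ) : (Fintype.card (G i) : ℂ) ≠ 0 := Nat.cast_ne_zero.2 Fintype.card_ne_zero
  have hq (i j : κ) (h : lev i = lev j) : (Fintype.card (G i) : ℂ) = Fintype.card (G j) := by
    simpa using hcard i j h
  have hdual : dualSetoid (Setoid.ker (posetWt (H := G) fun i j ↦ i = j ∨ lev i < lev j)) =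
      Setoid.ker (dualPosetWt (H := G) fun i j ↦ i = j ∨ lev i < lev j) := by
    ext χ χ'
    simp only [dualSetoid_ker_iff, Setoid.ker_def, posetWt_eq_idealCard, dualPosetWt_eq_idealCard,
      sum_filter_idealCard_piSupport, idealSum_puncturedSum_eq_iff hq₀ hq]
  refine ⟨hdual, ?_⟩
  ext g g'
  simp only [bidualSetoid_iff_of_dualSetoid_eq hdual, Setoid.ker_def, posetWt_eq_idealCard,
    dualPosetWt_eq_idealCard, sum_filter_idealCard_piSupport_comp1]
  exact idealSum_puncturedSum_eq_iff (lev := OrderDual.toDual ∘ lev) hq₀ (by simpa using hq)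

/-- For the hierarchical poset `𝐇(n; n₁, …, n_t)` on the index set
`𝒩 = {(i,j) : 1 ≤ i ≤ t, 1 ≤ j ≤ nᵢ}` (with `(i,j) < (i',j')` iff `i < i'`) and
`𝒢 = ∏ᵢ∏ⱼ G_{i,j}` with `|G_{i,1}| = ⋯ = |G_{i,nᵢ}|` for each level `i`, the dual of the
partition of `𝒢` into level sets of the poset weight `wt_𝐏` is the partition of `𝒢̂` into
level sets of the dual-poset weight `wt_𝐏̄`; consequently the poset-weight partition is
Fourier-reflexive. -/
theorem hierarchical_poset_duality
    (t : ℕ) (nl : Fin t → ℕ) (hnl : ∀ i, 0 < nl i)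
    (H : (Σ i : Fin t, Fin (nl i)) → Type*)
    [∀ s, AddCommGroup (H s)] [∀ s, Fintype (H s)] [∀ s, Nontrivial (H s)]
    (hcard : ∀ (i : Fin t) (j j' : Fin (nl i)),
      Nat.card (H ⟨i, j⟩) = Nat.card (H ⟨i, j'⟩)) :
    dualSetoid (Setoid.ker
        (posetWt (H := H) (fun x y : Σ i : Fin t, Fin (nl i) => x = y ∨ x.1 < y.1))) =
      Setoid.ker (dualPosetWt (H := H)
        (fun x y : Σ i : Fin t, Fin (nl i) => x = y ∨ x.1 < y.1)) ∧
    bidualSetoid (Setoid.ker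
        (posetWt (H := H) (fun x y : Σ i : Fin t, Fin (nl i) => x = y ∨ x.1 < y.1))) =
      Setoid.ker
        (posetWt (H := H) (fun x y : Σ i : Fin t, Fin (nl i) => x = y ∨ x.1 < y.1)) := by
  exact hierarchical_poset_duality_general Sigma.fst H
    (by rintro ⟨i, j⟩ ⟨_, j'⟩ rfl; exact hcard i j j')
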